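/- In a nonlinear model (p_k ≠ k/m for some 0 ≤ k ≤ m) with X_0 > 0 and Y_0 > 0, if z ∈ Z_P ∩ (0,1) is a stable zero, i.e., there exists ε > 0 such that P > 0 on (z−ε, z) and P < 0 on (z, z+ε), then P(lim_{n→∞} a_n = z) > 0. -/

import Mathlib

open MeasureTheory ProbabilityTheory Filter Set

noncomputable section

/-- The polynomial `P(z) = (1/2) ∑_{k=0}^m C(m,k) z^k (1-z)^{m-k} (p_k - k/m)`. -/
def polyP (m : ℕ) (p : ℕ → ℝ) (z : ℝ) : ℝ :=
  (1 / 2) * ∑ k ∈ Finset.range (m + 1),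
    (m.choose k : ℝ) * z ^ k * (1 - z) ^ (m - k) * (p k - (k : ℝ) / m)

/-- The zero set `Z_P = {z ∈ [0,1] : P(z) = 0}`. -/
def zeroSetP (m : ℕ) (p : ℕ → ℝ) : Set ℝ :=
  {z ∈ Set.Icc (0 : ℝ) 1 | polyP m p z = 0}

/-- The two-type preferential attachment process with `m` edges per new node and type
adoption parameters `p 0, …, p m`, defined on a probability space `(Ω, μ)` with filtration
`F`.  `A n` is the number of red nodes and `X n` the sum of the degrees of red nodes at time
`n`; the transition probabilities given `F n` are those of the model: a number `k` of red
neighbours is drawn from the `Binomial(m, x_n)` distribution, and then the new node is red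
with probability `p k` (adding `1` to the red nodes and `k + m` to the red degrees) and blue
with probability `1 - p k` (adding `k` to the red degrees). -/
structure PAProcess (Ω : Type) [MeasurableSpace Ω] where
  μ : Measure Ω
  isProb : IsProbabilityMeasure μ
  m : ℕ
  hm : 1 ≤ m
  p : ℕ → ℝ
  hp : ∀ k ≤ m, p k ∈ Set.Icc (0 : ℝ) 1
  A : ℕ → Ω → ℕ
  X : ℕ → Ω → ℕ
  F : Filtration ℕ ‹MeasurableSpace Ω›
  A0 : ℕ
  B0 : ℕ
  X0 : ℕ
  Y0 : ℕ
  hA0 : ∀ ω, A 0 ω = A0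
  hX0 : ∀ ω, X 0 ω = X0
  adaptedA : ∀ n, Measurable[F n] (A n)
  adaptedX : ∀ n, Measurable[F n] (X n)
  hXle : ∀ n ω, X n ω ≤ X0 + Y0 + 2 * m * n
  step_red : ∀ n, ∀ k ≤ m,
    μ[Set.indicator {ω | A (n + 1) ω = A n ω + 1 ∧ X (n + 1) ω = X n ω + k + m}
        (fun _ => (1 : ℝ)) | F n]
      =ᵐ[μ] fun ω => (m.choose k : ℝ) *
        ((X n ω : ℝ) / ((X0 : ℝ) + Y0 + 2 * m * n)) ^ k *
        (1 - (X n ω : ℝ) / ((X0 : ℝ) + Y0 + 2 * m * n)) ^ (m - k) * p k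
  step_blue : ∀ n, ∀ k ≤ m,
    μ[Set.indicator {ω | A (n + 1) ω = A n ω ∧ X (n + 1) ω = X n ω + k}
        (fun _ => (1 : ℝ)) | F n]
      =ᵐ[μ] fun ω => (m.choose k : ℝ) *
        ((X n ω : ℝ) / ((X0 : ℝ) + Y0 + 2 * m * n)) ^ k *
        (1 - (X n ω : ℝ) / ((X0 : ℝ) + Y0 + 2 * m * n)) ^ (m - k) * (1 - p k)

namespace PAProcess

variable {Ω : Type} [MeasurableSpace Ω] (P : PAProcess Ω)

/-- Total degree `S_n = S_0 + 2mn`. -/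
def S (n : ℕ) : ℕ := P.X0 + P.Y0 + 2 * P.m * n

/-- Normalized red degree `x_n = X_n / S_n`. -/
def x (n : ℕ) (ω : Ω) : ℝ := (P.X n ω : ℝ) / (P.S n : ℝ)

/-- Normalized red node count `a_n = A_n / (A_0 + B_0 + n)`. -/
def a (n : ℕ) (ω : Ω) : ℝ := (P.A n ω : ℝ) / ((P.A0 : ℝ) + P.B0 + n)

/-- The polynomial `P` of the process. -/
def poly : ℝ → ℝ := polyP P.m P.p

/-- The zero set `Z_P` of the process. -/
def Zp : Set ℝ := zeroSetP P.m P.p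

end PAProcess

/-!
Since the conditional mean increment of `X` is `2m (P(x_n) + x_n)`, the normalized red degree is a
Robbins–Monro process `x_{n+1} = x_n + (2m P(x_n) + ξ_n) / S_{n+1}` whose noise `ξ` is a bounded
martingale difference. Its stable zero `z` attracts along `P`, and two things make it a limit with
positive probability. First, `x_n` comes within `O(1/n)` of `z` with positive probability: at `z`
the mean of `ΔX - 2mz` vanishes, so at any time a move correcting the sign of `X_n - z S_n` has
positive probability, and `X_n - z S_n` can be kept bounded. Second, by Doob's maximal inequality
the noise accumulated after a late time stays small forever with positive probability; on that
event `x` never leaves a neighbourhood of `z` on which `P` pushes it towards `z`.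

Finally `a` is a Robbins–Monro process with target `2 P(x_n) + x_n`, so almost surely `a_n → z`
whenever `x_n → z`.
-/

lemma abs_add_eq_abs_sub_abs {v d : ℝ} (hvd : v * d ≤ 0) (hd : |d| ≤ |v|) :
    |v + d| = |v| - |d| := by
  rcases mul_nonpos_iff.1 hvd with ⟨hv, hd'⟩ | ⟨hv, hd'⟩
  · rw [abs_of_nonneg hv, abs_of_nonpos hd'] at *
    rw [abs_of_nonneg (by linarith)]; ring
  · rw [abs_of_nonpos hv, abs_of_nonneg hd'] at *
    rw [abs_of_nonpos (by linarith)]; ring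

lemma abs_add_le_max_of_mul_nonpos {v d : ℝ} (hvd : v * d ≤ 0) : |v + d| ≤ max |v| |d| := by
  rcases le_total |d| |v| with hle | hle
  · rw [abs_add_eq_abs_sub_abs hvd hle]
    exact (sub_le_self _ (abs_nonneg d)).trans (le_max_left _ _)
  · rw [add_comm, abs_add_eq_abs_sub_abs (by rwa [mul_comm]) hle]
    exact (sub_le_self _ (abs_nonneg v)).trans (le_max_right _ _)

lemma mul_nonpos_of_add_mul_nonpos {v m d : ℝ} (hm : |m| < |v|) (h : (v + m) * d ≤ 0) :
    v * d ≤ 0 := by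
  obtain ⟨hm₁, hm₂⟩ := abs_lt.1 hm
  rcases le_total 0 v with hv | hv
  · rw [abs_of_nonneg hv] at hm₁
    exact mul_nonpos_of_nonneg_of_nonpos hv (nonpos_of_mul_nonpos_right h (by linarith))
  · rw [abs_of_nonpos hv] at hm₂
    exact mul_nonpos_of_nonpos_of_nonneg hv (by by_contra! hd; nlinarith)

lemma exists_ge_le_of_decrease {e γ : ℕ → ℝ} {b c : ℝ} (he : ∀ n, 0 ≤ e n) (hγ : ∀ n, 0 ≤ γ n)
    (hγ_sum : ¬ Summable γ) (hc : 0 < c)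
    (hdecr : ∀ᶠ n in atTop, b < e n → e (n + 1) ≤ e n - c * γ n) (N : ℕ) :
    ∃ n ≥ N, e n ≤ b := by
  by_contra! hgt
  obtain ⟨K, hK⟩ := eventually_atTop.1 (hdecr.and (eventually_ge_atTop N))
  have hsum (n : ℕ) : e (K + n) + c * ∑ i ∈ Finset.range n, γ (K + i) ≤ e K := by
    induction n with
    | zero => simp
    | succ n ih =>
      have hstep := (hK (K + n) le_self_add).1 (hgt _ (hK (K + n) le_self_add).2)
      rw [Finset.sum_range_succ, mul_add, ← add_assoc K n 1]
      linarith
  refine hγ_sum ((summable_nat_add_iff K).1 ?_)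
  refine summable_of_sum_range_le (c := e K / c) (fun n => hγ _) fun n => ?_
  rw [le_div_iff₀' hc]
  simp only [add_comm _ K]
  linarith [hsum n, he (K + n)]

lemma eventually_le_of_decrease {e γ : ℕ → ℝ} {b b' c : ℝ} (he : ∀ n, 0 ≤ e n)
    (hγ : ∀ n, 0 ≤ γ n) (hγ_sum : ¬ Summable γ) (hc : 0 < c) (hbb' : b ≤ b')
    (hdecr : ∀ᶠ n in atTop, b < e n → e (n + 1) ≤ e n - c * γ n)
    (hjump : ∀ᶠ n in atTop, e n ≤ b → e (n + 1) ≤ b') :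
    ∀ᶠ n in atTop, e n ≤ b' := by
  obtain ⟨N, hN⟩ := eventually_atTop.1 (hdecr.and hjump)
  obtain ⟨K, hNK, hK⟩ := exists_ge_le_of_decrease he hγ hγ_sum hc hdecr N
  filter_upwards [eventually_ge_atTop K] with n hn
  induction n, hn using Nat.le_induction with
  | base => exact hK.trans hbb'
  | succ n hn ih =>
    obtain ⟨hdecr_n, hjump_n⟩ := hN n (hNK.trans hn)
    rcases le_or_gt (e n) b with hle | hgt
    · exact hjump_n hle
    · linarith [hdecr_n hgt, mul_nonneg hc.le (hγ n)]

lemma tendsto_zero_of_tendsto_sq {ι : Type*} {l : Filter ι} {u : ι → ℝ}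
    (hu : Tendsto (fun i => u i ^ 2) l (nhds 0)) : Tendsto u l (nhds 0) := by
  refine (tendsto_zero_iff_abs_tendsto_zero u).2 ?_
  simpa [Real.sqrt_sq_eq_abs, Function.comp_def] using hu.sqrt

/-! ### Robbins–Monro recursions -/

/-- The Robbins–Monro recursion with step sizes `γ`, drift `h` and noise `ξ`. The drift is a
sequence, so that it may depend on more than the current state `y n`. -/
def IsRobbinsMonro (γ h ξ y : ℕ → ℝ) : Prop :=
  ∀ n, y (n + 1) = y n + γ n * (h n + ξ n)

/-- The noise accumulated by a Robbins–Monro recursion before time `n`. -/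
def noiseSum (γ ξ : ℕ → ℝ) (n : ℕ) : ℝ :=
  ∑ j ∈ Finset.range n, γ j * ξ j

lemma noiseSum_succ (γ ξ : ℕ → ℝ) (n : ℕ) :
    noiseSum γ ξ (n + 1) = noiseSum γ ξ n + γ n * ξ n :=
  Finset.sum_range_succ _ _

namespace IsRobbinsMonro

variable {γ h ξ y : ℕ → ℝ} {z : ℝ}

lemma add_left (hy : IsRobbinsMonro γ h ξ y) (N : ℕ) :
    IsRobbinsMonro (fun n => γ (N + n)) (fun n => h (N + n)) (fun n => ξ (N + n))
      (fun n => y (N + n)) :=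
  fun n => hy (N + n)

lemma sub_noiseSum_succ (hy : IsRobbinsMonro γ h ξ y) (n : ℕ) :
    y (n + 1) - noiseSum γ ξ (n + 1) = y n - noiseSum γ ξ n + γ n * h n := by
  rw [hy n, noiseSum_succ]
  ring

lemma abs_sub_le_of_abs_noiseSum_le (hy : IsRobbinsMonro γ h ξ y) {η : ℝ}
    (hnoise : ∀ n, |noiseSum γ ξ n| ≤ η) (hstart : |y 0 - z| ≤ 2 * η)
    (hstep : ∀ n, |y n - z| ≤ 3 * η → |γ n * h n| ≤ η)
    (hsign : ∀ n, |y n - z| ≤ 3 * η → (y n - z) * (γ n * h n) ≤ 0) (n : ℕ) :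
    |y n - z| ≤ 3 * η := by
  have of_sub_noiseSum {n : ℕ} (hn : |y n - noiseSum γ ξ n - z| ≤ 2 * η) :
      |y n - z| ≤ 3 * η := calc
    |y n - z| = |(y n - noiseSum γ ξ n - z) + noiseSum γ ξ n| := by ring_nf
    _ ≤ 3 * η := by linarith [abs_add_le (y n - noiseSum γ ξ n - z) (noiseSum γ ξ n), hnoise n]
  suffices hw : ∀ n, |y n - noiseSum γ ξ n - z| ≤ 2 * η from of_sub_noiseSum (hw n)
  intro n
  induction n with
  | zero => simpa [noiseSum] using hstart
  | succ n ih =>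
    have hyn := of_sub_noiseSum ih
    rw [hy.sub_noiseSum_succ, add_sub_right_comm]
    rcases le_or_gt |y n - noiseSum γ ξ n - z| η with hle | hgt
    · linarith [abs_add_le (y n - noiseSum γ ξ n - z) (γ n * h n), hstep n hyn]
    · have hsign' : (y n - noiseSum γ ξ n - z) * (γ n * h n) ≤ 0 :=
        mul_nonpos_of_add_mul_nonpos ((hnoise n).trans_lt hgt) (by
          convert hsign n hyn using 2; ring)
      rw [abs_add_eq_abs_sub_abs hsign' ((hstep n hyn).trans hgt.le)]
      linarith [abs_nonneg (γ n * h n)]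

theorem tendsto_of_restoring_drift (hy : IsRobbinsMonro γ h ξ y) (hγ : ∀ n, 0 ≤ γ n)
    (hγ_sum : ¬ Summable γ) {L : ℝ} (hnoise : Tendsto (noiseSum γ ξ) atTop (nhds L))
    (hstep : Tendsto (fun n => γ n * h n) atTop (nhds 0))
    (hdrift : ∀ s > 0, ∃ c > 0, ∀ᶠ n in atTop,
      s ≤ |y n - z| → (y n - z) * h n ≤ -(c * |y n - z|)) :
    Tendsto y atTop (nhds z) := by
  set r : ℕ → ℝ := fun n => noiseSum γ ξ n - L
  have hr_small {s : ℝ} (hs : 0 < s) : ∀ᶠ n in atTop, |r n| < s :=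
    Metric.tendsto_nhds.1 hnoise s hs
  have hstep_small {s : ℝ} (hs : 0 < s) : ∀ᶠ n in atTop, |γ n * h n| < s := by
    simpa [Real.dist_eq] using Metric.tendsto_nhds.1 hstep s hs
  have hw_succ (n : ℕ) : y (n + 1) - r (n + 1) - z = (y n - r n - z) + γ n * h n := by
    linarith [hy.sub_noiseSum_succ n]
  suffices hw : ∀ s > 0, ∀ᶠ n in atTop, |y n - r n - z| ≤ 3 * s by
    refine Metric.tendsto_nhds.2 fun s hs => ?_
    filter_upwards [hw (s / 4) (by positivity), hr_small (show 0 < s / 4 by positivity)]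
      with n hwn hrn
    rw [Real.dist_eq, show y n - z = (y n - r n - z) + r n by ring]
    linarith [abs_add_le (y n - r n - z) (r n)]
  intro s hs
  obtain ⟨c, hc, hdrift_s⟩ := hdrift s hs
  refine eventually_le_of_decrease (b := 2 * s) (fun n => abs_nonneg _) hγ hγ_sum hc
    (by linarith) ?_ ?_
  · filter_upwards [hdrift_s, hr_small hs, hstep_small hs] with n hdrift_n hrn hstep_n hgt
    have hy_far : s ≤ |y n - z| := by
      have := abs_add_le (y n - z) (-r n)
      rw [abs_neg, ← sub_eq_add_neg, sub_right_comm] at this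
      linarith
    have hyn := hdrift_n hy_far
    have hc_le : c ≤ |h n| := by
      refine le_of_mul_le_mul_left ?_ (hs.trans_le hy_far)
      rw [← abs_mul]
      linarith [neg_le_abs ((y n - z) * h n)]
    have hsign : (y n - r n - z) * (γ n * h n) ≤ 0 := by
      refine mul_nonpos_of_add_mul_nonpos (m := r n) (by linarith) ?_
      rw [sub_right_comm, sub_add_cancel, mul_left_comm]
      exact mul_nonpos_of_nonneg_of_nonpos (hγ n) (hyn.trans (neg_nonpos.2 (by positivity)))
    rw [hw_succ, abs_add_eq_abs_sub_abs hsign (by linarith), abs_mul, abs_of_nonneg (hγ n)]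
    linarith [mul_le_mul_of_nonneg_left hc_le (hγ n)]
  · filter_upwards [hstep_small hs] with n hstep_n hle
    rw [hw_succ]
    linarith [abs_add_le (y n - r n - z) (γ n * h n)]

theorem tendsto_of_tendsto_target {g : ℕ → ℝ} (hy : IsRobbinsMonro γ (fun n => g n - y n) ξ y)
    (hγ : ∀ n, 0 ≤ γ n) (hγ_zero : Tendsto γ atTop (nhds 0)) (hγ_sum : ¬ Summable γ)
    {L : ℝ} (hnoise : Tendsto (noiseSum γ ξ) atTop (nhds L)) {C : ℝ} (hC : ∀ n, |y n| ≤ C)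
    (hg : Tendsto g atTop (nhds z)) :
    Tendsto y atTop (nhds z) := by
  refine hy.tendsto_of_restoring_drift hγ hγ_sum hnoise ?_ fun s hs => ⟨s / 2, by positivity, ?_⟩
  · have hγy : Tendsto (fun n => γ n * y n) atTop (nhds 0) :=
      hγ_zero.zero_mul_isBoundedUnder_le (isBoundedUnder_of ⟨C, hC⟩)
    simpa [mul_sub] using (hγ_zero.mul hg).sub hγy
  · filter_upwards [Metric.tendsto_nhds.1 hg (s / 2) (by positivity)] with n hgn hfar
    rw [Real.dist_eq] at hgn
    calc (y n - z) * (g n - y n) = (y n - z) * (g n - z) - |y n - z| * |y n - z| := by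
          rw [abs_mul_abs_self]; ring
      _ ≤ |y n - z| * |g n - z| - |y n - z| * |y n - z| := by
          linarith [(le_abs_self _).trans_eq (abs_mul (y n - z) (g n - z))]
      _ ≤ -(s / 2 * |y n - z|) := by nlinarith

theorem tendsto_of_local_attraction {H : ℝ → ℝ} (hy : IsRobbinsMonro γ (fun n => H (y n)) ξ y)
    (hγ : ∀ n, 0 ≤ γ n) (hγ_zero : Tendsto γ atTop (nhds 0)) (hγ_sum : ¬ Summable γ)
    {L : ℝ} (hnoise : Tendsto (noiseSum γ ξ) atTop (nhds L)) (hH : Continuous H) {δ : ℝ}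
    (hattr : ∀ u, u ≠ z → |u - z| ≤ δ → (u - z) * H u < 0) (hδ : ∀ n, |y n - z| ≤ δ) :
    Tendsto y atTop (nhds z) := by
  have hball (n : ℕ) : y n ∈ Metric.closedBall z δ := by
    simpa [Metric.mem_closedBall, Real.dist_eq] using hδ n
  refine hy.tendsto_of_restoring_drift hγ hγ_sum hnoise ?_ fun s hs => ?_
  · obtain ⟨C, hC⟩ := (isCompact_closedBall z δ).exists_bound_of_continuousOn hH.continuousOn
    exact hγ_zero.zero_mul_isBoundedUnder_le
      (isBoundedUnder_of ⟨C, fun n => hC _ (hball n)⟩)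
  · have hne {u : ℝ} (hu : u ∈ Metric.closedBall z δ \ Metric.ball z s) : 0 < |u - z| :=
      hs.trans_le (by simpa [Real.dist_eq] using hu.2)
    have hcont : ContinuousOn (fun u => -((u - z) * H u) / |u - z|)
        (Metric.closedBall z δ \ Metric.ball z s) := by
      refine ContinuousOn.div (by fun_prop) (by fun_prop) fun u hu => (hne hu).ne'
    obtain ⟨c, hc, hcH⟩ := ((isCompact_closedBall z δ).diff Metric.isOpen_ball).exists_forall_le'
      hcont (a := 0) fun u hu => div_pos (neg_pos.2 (hattr u (sub_ne_zero.1 (abs_pos.1 (hne hu)))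
        (by simpa [Real.dist_eq] using hu.1))) (hne hu)
    refine ⟨c, hc, Eventually.of_forall fun n hfar => ?_⟩
    have hmem : y n ∈ Metric.closedBall z δ \ Metric.ball z s :=
      ⟨hball n, by simpa [Real.dist_eq] using hfar⟩
    linarith [(le_div_iff₀ (hne hmem)).1 (hcH _ hmem)]

theorem tendsto_of_abs_noiseSum_le {H : ℝ → ℝ}
    (hy : IsRobbinsMonro γ (fun n => H (y n)) ξ y) (hγ : ∀ n, 0 ≤ γ n)
    (hγ_zero : Tendsto γ atTop (nhds 0)) (hγ_sum : ¬ Summable γ) (hH : Continuous H) {η : ℝ}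
    (hattr : ∀ u, u ≠ z → |u - z| ≤ 3 * η → (u - z) * H u < 0)
    (hstep : ∀ n u, |u - z| ≤ 3 * η → |γ n * H u| ≤ η) (hstart : |y 0 - z| ≤ 2 * η)
    (hnoise_le : ∀ n, |noiseSum γ ξ n| ≤ η)
    {L : ℝ} (hnoise : Tendsto (noiseSum γ ξ) atTop (nhds L)) :
    Tendsto y atTop (nhds z) := by
  refine hy.tendsto_of_local_attraction hγ hγ_zero hγ_sum hnoise hH hattr
    (hy.abs_sub_le_of_abs_noiseSum_le hnoise_le hstart (fun n => hstep n _) fun n hn => ?_)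
  have hsign : (y n - z) * H (y n) ≤ 0 := by
    rcases eq_or_ne (y n) z with heq | hne
    · simp [heq]
    · exact (hattr _ hne hn).le
  rw [mul_left_comm]
  exact mul_nonpos_of_nonneg_of_nonpos (hγ n) hsign

end IsRobbinsMonro

lemma eventually_forall_abs_mul_le {γ : ℕ → ℝ} {H : ℝ → ℝ} (hγ_zero : Tendsto γ atTop (nhds 0))
    (hH : Continuous H) (z r : ℝ) {η : ℝ} (hη : 0 < η) :
    ∀ᶠ N in atTop, ∀ n u, |u - z| ≤ r → |γ (N + n) * H u| ≤ η := by
  obtain ⟨K, hK⟩ := (isCompact_closedBall z r).exists_bound_of_continuousOn hH.continuousOn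
  have hγK : Tendsto (fun n => |γ n| * |K|) atTop (nhds 0) := by
    simpa using hγ_zero.abs.mul_const |K|
  obtain ⟨N₀, hN₀⟩ := eventually_atTop.1 (hγK.eventually_le_const hη)
  filter_upwards [eventually_ge_atTop N₀] with N hN n u hu
  rw [abs_mul]
  exact (mul_le_mul_of_nonneg_left ((hK u hu).trans (le_abs_self K)) (abs_nonneg _)).trans
    (hN₀ _ (hN.trans le_self_add))

/-- The step sizes of the ratio process `n ↦ U n / (α + β * n)`. -/
def stepSize (α β : ℝ) (n : ℕ) : ℝ :=
  1 / (α + β * (n + 1))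

section StepSize

variable {α β : ℝ}

lemma stepSize_pos (hα : 0 ≤ α) (hβ : 0 < β) (n : ℕ) : 0 < stepSize α β n := by
  unfold stepSize
  positivity

lemma stepSize_eq (hβ : β ≠ 0) (n : ℕ) : stepSize α β n = β⁻¹ * (1 / (n + (α / β + 1))) := by
  rw [stepSize, ← one_div, one_div_mul_one_div]
  congr 1
  field_simp
  ring

lemma not_summable_stepSize (hβ : 0 < β) : ¬ Summable (stepSize α β) := by
  have hne : β⁻¹ ≠ 0 := inv_ne_zero hβ.ne'
  rw [funext (stepSize_eq hβ.ne'), summable_mul_left_iff hne]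
  intro h
  refine (Real.summable_one_div_nat_add_rpow (α / β + 1) 1).not.2 (lt_irrefl 1) ?_
  simpa [abs_inv] using h.abs

lemma summable_stepSize_sq (hβ : 0 < β) :
    Summable fun n => stepSize α β n ^ 2 := by
  have := (Real.summable_one_div_nat_add_rpow (α / β + 1) 2).2 one_lt_two
  simp only [Real.rpow_ofNat, sq_abs] at this
  simpa only [stepSize_eq hβ.ne', mul_pow, one_div_pow] using this.mul_left (β⁻¹ ^ 2)

lemma tendsto_stepSize (hβ : 0 < β) : Tendsto (stepSize α β) atTop (nhds 0) :=
  tendsto_zero_of_tendsto_sq (summable_stepSize_sq hβ).tendsto_atTop_zero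

lemma isRobbinsMonro_ratio {U g ξ : ℕ → ℝ} (hα : 0 ≤ α) (hβ : 0 < β) (hU₀ : α = 0 → U 0 = 0)
    (hU : ∀ n, U (n + 1) = U n + (g n + ξ n)) :
    IsRobbinsMonro (stepSize α β) (fun n => g n - β * (U n / (α + β * n))) ξ
      fun n => U n / (α + β * n) := by
  intro n
  have hsucc : α + β * ((n : ℝ) + 1) ≠ 0 := by positivity
  have hcancel : U n / (α + β * n) * (α + β * n) = U n := by
    refine div_mul_cancel_of_imp fun h0 => ?_
    obtain ⟨rfl, hn⟩ := (add_eq_zero_iff_of_nonneg hα (by positivity)).1 h0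
    obtain rfl : n = 0 := by simpa [hβ.ne'] using hn
    exact hU₀ rfl
  simp only [stepSize, Nat.cast_succ]
  rw [div_eq_iff hsucc, add_mul, one_div_mul_eq_div, div_mul_cancel₀ _ hsucc, hU]
  linear_combination -hcancel

end StepSize

/-! ### Martingale noise -/

section Probability

variable {Ω : Type*} {mΩ : MeasurableSpace Ω} {μ : Measure Ω} {F : Filtration ℕ mΩ}

/-- The filtration `n ↦ F (N + n)` of the process started at time `N`. -/
def shiftFiltration (F : Filtration ℕ mΩ) (N : ℕ) : Filtration ℕ mΩ where
  seq n := F (N + n)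
  mono' _ _ h := F.mono (Nat.add_le_add_left h N)
  le' n := F.le (N + n)

/-- A uniformly bounded martingale difference sequence, indexed so that `ξ n` is the increment
between times `n` and `n + 1`. -/
structure IsBoundedMartingaleDiff (ξ : ℕ → Ω → ℝ) (F : Filtration ℕ mΩ) (μ : Measure Ω)
    (C : ℝ) : Prop where
  stronglyMeasurable : ∀ n, StronglyMeasurable[F (n + 1)] (ξ n)
  condExp_eq_zero : ∀ n, μ[ξ n | F n] =ᵐ[μ] 0
  abs_le : ∀ n, ∀ᵐ ω ∂μ, |ξ n ω| ≤ C

namespace IsBoundedMartingaleDiff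

variable {ξ : ℕ → Ω → ℝ} {C : ℝ}

lemma shift (hξ : IsBoundedMartingaleDiff ξ F μ C) (N : ℕ) :
    IsBoundedMartingaleDiff (fun n => ξ (N + n)) (shiftFiltration F N) μ C where
  stronglyMeasurable n := hξ.stronglyMeasurable (N + n)
  condExp_eq_zero n := hξ.condExp_eq_zero (N + n)
  abs_le n := hξ.abs_le (N + n)

variable [IsFiniteMeasure μ] {γ : ℕ → ℝ}

lemma memLp (hξ : IsBoundedMartingaleDiff ξ F μ C) (n : ℕ) (q : ENNReal) : MemLp (ξ n) q μ :=
  .of_bound ((hξ.stronglyMeasurable n).mono (F.le _)).aestronglyMeasurable C (hξ.abs_le n)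

lemma integrable (hξ : IsBoundedMartingaleDiff ξ F μ C) (n : ℕ) : Integrable (ξ n) μ :=
  (hξ.memLp n 1).integrable le_rfl

lemma restrict (hξ : IsBoundedMartingaleDiff ξ F μ C) {E : Set Ω} (hE : MeasurableSet[F 0] E) :
    IsBoundedMartingaleDiff ξ F (μ.restrict E) C where
  stronglyMeasurable := hξ.stronglyMeasurable
  condExp_eq_zero n :=
    (condExp_restrict_ae_eq_restrict (F.le n) (F.mono n.zero_le _ hE) (hξ.integrable n)).trans
      (ae_restrict_of_ae (hξ.condExp_eq_zero n))
  abs_le n := ae_restrict_of_ae (hξ.abs_le n)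

lemma memLp_noiseSum (hξ : IsBoundedMartingaleDiff ξ F μ C) (n : ℕ) (q : ENNReal) :
    MemLp (fun ω => noiseSum γ (ξ · ω) n) q μ :=
  memLp_finsetSum _ fun j _ => (hξ.memLp j q).const_mul (γ j)

lemma martingale_noiseSum (hξ : IsBoundedMartingaleDiff ξ F μ C) :
    Martingale (fun n ω => noiseSum γ (ξ · ω) n) F μ := by
  refine martingale_of_condExp_sub_eq_zero_nat (fun n => ?_)
    (fun n => (hξ.memLp_noiseSum n 1).integrable le_rfl) fun n => ?_
  · exact Finset.stronglyMeasurable_fun_sum _ fun j hj => ((hξ.stronglyMeasurable j).mono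
      (F.mono (Finset.mem_range.1 hj))).const_mul (γ j)
  · have hincr : (fun ω => noiseSum γ (ξ · ω) (n + 1)) - (fun ω => noiseSum γ (ξ · ω) n) =
        γ n • ξ n := by
      ext ω
      simp [noiseSum_succ]
    rw [hincr]
    filter_upwards [condExp_smul (γ n) (ξ n) (F n), hξ.condExp_eq_zero n] with ω h₁ h₂
    rw [h₁, Pi.smul_apply, h₂, Pi.zero_apply, smul_zero]

lemma integral_noiseSum_mul_eq_zero (hξ : IsBoundedMartingaleDiff ξ F μ C) (n : ℕ) :
    ∫ ω, noiseSum γ (ξ · ω) n * ξ n ω ∂μ = 0 := by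
  have hmul : Integrable ((fun ω => noiseSum γ (ξ · ω) n) * ξ n) μ :=
    (hξ.memLp_noiseSum n 2).integrable_mul (hξ.memLp n 2)
  calc ∫ ω, noiseSum γ (ξ · ω) n * ξ n ω ∂μ
      = ∫ ω, (μ[(fun ω => noiseSum γ (ξ · ω) n) * ξ n | F n]) ω ∂μ :=
        (integral_condExp (F.le n)).symm
    _ = ∫ _, (0 : ℝ) ∂μ := by
        refine integral_congr_ae ?_
        filter_upwards [condExp_mul_of_stronglyMeasurable_left
          (hξ.martingale_noiseSum.stronglyAdapted n) hmul (hξ.integrable n),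
          hξ.condExp_eq_zero n] with ω h₁ h₂
        rw [h₁, Pi.mul_apply, h₂, Pi.zero_apply, mul_zero]
    _ = 0 := integral_zero _ _

lemma integral_sq_le (hξ : IsBoundedMartingaleDiff ξ F μ C) (n : ℕ) :
    ∫ ω, ξ n ω ^ 2 ∂μ ≤ C ^ 2 * μ.real univ := by
  calc ∫ ω, ξ n ω ^ 2 ∂μ ≤ ∫ _, C ^ 2 ∂μ := by
        refine integral_mono_ae (hξ.memLp n 2).integrable_sq (integrable_const _) ?_
        filter_upwards [hξ.abs_le n] with ω hω
        simpa using pow_le_pow_left₀ (abs_nonneg _) hω 2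
    _ = C ^ 2 * μ.real univ := by rw [integral_const, smul_eq_mul, mul_comm]

lemma integral_noiseSum_sq_le (hξ : IsBoundedMartingaleDiff ξ F μ C) (n : ℕ) :
    ∫ ω, noiseSum γ (ξ · ω) n ^ 2 ∂μ ≤
      C ^ 2 * (∑ j ∈ Finset.range n, γ j ^ 2) * μ.real univ := by
  induction n with
  | zero => simp [noiseSum]
  | succ n ih =>
    have hsq : Integrable (fun ω => noiseSum γ (ξ · ω) n ^ 2) μ :=
      (hξ.memLp_noiseSum n 2).integrable_sq
    have hcross : Integrable (fun ω => noiseSum γ (ξ · ω) n * ξ n ω) μ :=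
      (hξ.memLp_noiseSum n 2).integrable_mul (hξ.memLp n 2)
    have hξsq : Integrable (fun ω => ξ n ω ^ 2) μ := (hξ.memLp n 2).integrable_sq
    calc ∫ ω, noiseSum γ (ξ · ω) (n + 1) ^ 2 ∂μ
        = ∫ ω, noiseSum γ (ξ · ω) n ^ 2 + 2 * γ n * (noiseSum γ (ξ · ω) n * ξ n ω)
            + γ n ^ 2 * ξ n ω ^ 2 ∂μ := by
          simp only [noiseSum_succ]
          congr with ω
          ring
      _ = ∫ ω, noiseSum γ (ξ · ω) n ^ 2 ∂μ + γ n ^ 2 * ∫ ω, ξ n ω ^ 2 ∂μ := by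
          rw [integral_add (hsq.fun_add (hcross.const_mul _)) (hξsq.const_mul _),
            integral_add hsq (hcross.const_mul _), integral_const_mul, integral_const_mul,
            hξ.integral_noiseSum_mul_eq_zero, mul_zero, add_zero]
      _ ≤ C ^ 2 * (∑ j ∈ Finset.range n, γ j ^ 2) * μ.real univ +
            γ n ^ 2 * (C ^ 2 * μ.real univ) := by
          gcongr
          exact hξ.integral_sq_le n
      _ = C ^ 2 * (∑ j ∈ Finset.range (n + 1), γ j ^ 2) * μ.real univ := by
          rw [Finset.sum_range_succ]
          ring

lemma submartingale_noiseSum_sq (hξ : IsBoundedMartingaleDiff ξ F μ C) :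
    Submartingale (fun n ω => noiseSum γ (ξ · ω) n ^ 2) F μ := by
  have hM : Martingale (fun n ω => noiseSum γ (ξ · ω) n) F μ := hξ.martingale_noiseSum
  have hsq (n : ℕ) := (hξ.memLp_noiseSum (γ := γ) n 2).integrable_sq
  refine ⟨fun n => (hM.stronglyAdapted n).pow 2, fun i j hij => ?_, hsq⟩
  filter_upwards [hM.condExp_ae_eq hij, even_two.convexOn_pow.map_condExp_le_univ (F.le i)
    (by fun_prop : Continuous fun t : ℝ => t ^ 2).lowerSemicontinuous (hM.integrable j)
    (hsq j)] with ω h₁ h₂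
  rw [Function.comp_apply, h₁] at h₂
  exact h₂

theorem maximal_ineq (hξ : IsBoundedMartingaleDiff ξ F μ C) {η : ℝ} (hη : 0 ≤ η) (n : ℕ) :
    ENNReal.ofReal (η ^ 2) * μ {ω | ∃ k ≤ n, η ≤ |noiseSum γ (ξ · ω) k|} ≤
      ENNReal.ofReal (C ^ 2 * (∑ j ∈ Finset.range n, γ j ^ 2) * μ.real univ) := by
  have hset : {ω | ∃ k ≤ n, η ≤ |noiseSum γ (ξ · ω) k|} =
      {ω | ((η ^ 2).toNNReal : ℝ) ≤ (Finset.range (n + 1)).sup' Finset.nonempty_range_add_one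
        fun k => noiseSum γ (ξ · ω) k ^ 2} := by
    ext ω
    simp [Finset.le_sup'_iff, sq_nonneg, sq_le_sq, abs_of_nonneg hη]
  rw [hset]
  refine (MeasureTheory.maximal_ineq hξ.submartingale_noiseSum_sq
    (fun _ _ => sq_nonneg _) n).trans (ENNReal.ofReal_le_ofReal ?_)
  exact (setIntegral_le_integral (hξ.memLp_noiseSum n 2).integrable_sq
    (ae_of_all _ fun _ => sq_nonneg _)).trans (hξ.integral_noiseSum_sq_le n)

theorem measure_forall_abs_noiseSum_le_ne_zero [NeZero μ]
    (hξ : IsBoundedMartingaleDiff ξ F μ C) {V η : ℝ}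
    (hV : ∀ n, ∑ j ∈ Finset.range n, γ j ^ 2 ≤ V) (hη : 0 ≤ η) (hVη : C ^ 2 * V < η ^ 2) :
    μ {ω | ∀ n, |noiseSum γ (ξ · ω) n| ≤ η} ≠ 0 := by
  have hexceed : ENNReal.ofReal (η ^ 2) * μ (⋃ n, {ω | ∃ k ≤ n, η ≤ |noiseSum γ (ξ · ω) k|}) ≤
      ENNReal.ofReal (C ^ 2 * V * μ.real univ) := by
    have hmono : Monotone fun n => {ω | ∃ k ≤ n, η ≤ |noiseSum γ (ξ · ω) k|} :=
      fun i j hij ω ⟨k, hk, hkη⟩ => ⟨k, hk.trans hij, hkη⟩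
    rw [hmono.measure_iUnion, ENNReal.mul_iSup]
    refine iSup_le fun n => (hξ.maximal_ineq hη n).trans (ENNReal.ofReal_le_ofReal ?_)
    gcongr
    exact hV n
  intro hzero
  have hfull : μ (⋃ n, {ω | ∃ k ≤ n, η ≤ |noiseSum γ (ξ · ω) k|}) = μ univ := by
    refine measure_congr (eventuallyEq_univ.2 ?_)
    filter_upwards [measure_eq_zero_iff_ae_notMem.1 hzero] with ω hω
    obtain ⟨k, hk⟩ := not_forall.1 hω
    exact mem_iUnion.2 ⟨k, k, le_rfl, (not_le.1 hk).le⟩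
  rw [hfull, ← ofReal_measureReal, ← ENNReal.ofReal_mul (sq_nonneg η)] at hexceed
  have hmass : 0 < μ.real univ := measureReal_univ_pos
  have hV₀ : 0 ≤ V := by simpa using hV 0
  rw [ENNReal.ofReal_le_ofReal_iff (by positivity)] at hexceed
  exact absurd (le_of_mul_le_mul_right hexceed hmass) hVη.not_ge

theorem ae_exists_tendsto_noiseSum (hξ : IsBoundedMartingaleDiff ξ F μ C)
    (hγ : Summable fun n => γ n ^ 2) :
    ∀ᵐ ω ∂μ, ∃ L, Tendsto (noiseSum γ (ξ · ω)) atTop (nhds L) := by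
  have hM : Martingale (fun n ω => noiseSum γ (ξ · ω) n) F μ := hξ.martingale_noiseSum
  refine hM.submartingale.exists_ae_tendsto_of_bdd
    (R := (μ.real univ + C ^ 2 * (∑' j, γ j ^ 2) * μ.real univ).toNNReal) fun n => ?_
  have hsq := (hξ.memLp_noiseSum (γ := γ) n 2).integrable_sq
  rw [eLpNorm_one_eq_lintegral_enorm, ← ofReal_integral_norm_eq_lintegral_enorm (hM.integrable n)]
  refine ENNReal.ofReal_le_ofReal ?_
  calc ∫ ω, ‖noiseSum γ (ξ · ω) n‖ ∂μ ≤ ∫ ω, 1 + noiseSum γ (ξ · ω) n ^ 2 ∂μ := by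
        refine integral_mono (hM.integrable n).norm ((integrable_const 1).add hsq) fun ω => ?_
        simp only [Real.norm_eq_abs]
        nlinarith [sq_abs (noiseSum γ (ξ · ω) n), sq_nonneg (|noiseSum γ (ξ · ω) n| - 1 / 2)]
    _ = μ.real univ + ∫ ω, noiseSum γ (ξ · ω) n ^ 2 ∂μ := by
        rw [integral_add (integrable_const 1) hsq]; simp
    _ ≤ μ.real univ + C ^ 2 * (∑' j, γ j ^ 2) * μ.real univ := by
        grw [hξ.integral_noiseSum_sq_le n, hγ.sum_le_tsum _ fun _ _ => sq_nonneg _]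

end IsBoundedMartingaleDiff


/-- The innovations of `f` along `F`: what remains of each `f n` once its best prediction at time
`n` is subtracted. -/
def innovation (F : Filtration ℕ mΩ) (μ : Measure Ω) (f : ℕ → Ω → ℝ) (n : ℕ) : Ω → ℝ :=
  f n - μ[f n | F n]

lemma isBoundedMartingaleDiff_innovation [IsFiniteMeasure μ] {f : ℕ → Ω → ℝ} {R : ℝ}
    (hf : ∀ n, StronglyMeasurable[F (n + 1)] (f n)) (hR : ∀ n, ∀ᵐ ω ∂μ, |f n ω| ≤ R) :
    IsBoundedMartingaleDiff (innovation F μ f) F μ (2 * R) where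
  stronglyMeasurable n := (hf n).sub (stronglyMeasurable_condExp.mono (F.mono n.le_succ))
  condExp_eq_zero n := by
    have hint : Integrable (f n) μ :=
      .of_bound ((hf n).mono (F.le _)).aestronglyMeasurable R (hR n)
    filter_upwards [condExp_sub hint integrable_condExp (F n),
      condExp_condExp_of_le le_rfl (F.le n) (f := f n) (μ := μ)] with ω hsub hidem
    rw [innovation, hsub, Pi.sub_apply, hidem, sub_self, Pi.zero_apply]
  abs_le n := by
    filter_upwards [hR n, ae_bdd_abs_condExp_of_ae_bdd_abs (m := F n) (hR n)] with ω h₁ h₂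
    rw [innovation, Pi.sub_apply]
    linarith [abs_sub (f n ω) ((μ[f n | F n]) ω)]

/-- The increments `U (n + 1) - U n` of a process. -/
def increment (U : ℕ → Ω → ℝ) (n : ℕ) : Ω → ℝ :=
  U (n + 1) - U n

lemma isBoundedMartingaleDiff_innovation_increment [IsFiniteMeasure μ] {U : ℕ → Ω → ℝ} {R : ℝ}
    (hU : ∀ n, Measurable[F n] (U n)) (hR : ∀ n, ∀ᵐ ω ∂μ, |increment U n ω| ≤ R) :
    IsBoundedMartingaleDiff (innovation F μ (increment U)) F μ (2 * R) :=
  isBoundedMartingaleDiff_innovation (fun n => ((hU (n + 1)).sub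
    ((hU n).mono (F.mono n.le_succ) le_rfl)).stronglyMeasurable) hR

lemma ae_isRobbinsMonro_ratio {U g : ℕ → Ω → ℝ} {α β : ℝ} (hα : 0 ≤ α) (hβ : 0 < β)
    (hU₀ : α = 0 → ∀ ω, U 0 ω = 0) (hg : ∀ n, μ[increment U n | F n] =ᵐ[μ] g n) :
    ∀ᵐ ω ∂μ, IsRobbinsMonro (stepSize α β) (fun n => g n ω - β * (U n ω / (α + β * n)))
      (innovation F μ (increment U) · ω) fun n => U n ω / (α + β * n) := by
  filter_upwards [ae_all_iff.2 hg] with ω hgω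
  refine isRobbinsMonro_ratio hα hβ (fun h => hU₀ h ω) fun n => ?_
  rw [innovation, Pi.sub_apply, hgω, increment, Pi.sub_apply]
  ring

theorem measure_tendsto_ne_zero_of_local_attraction [IsFiniteMeasure μ] {γ : ℕ → ℝ}
    {ξ y : ℕ → Ω → ℝ} {H : ℝ → ℝ} {C z δ : ℝ} (hγ : ∀ n, 0 ≤ γ n) (hγ_sum : ¬ Summable γ)
    (hγ_sq : Summable fun n => γ n ^ 2) (hξ : IsBoundedMartingaleDiff ξ F μ C)
    (hy_meas : ∀ n, Measurable[F n] (y n))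
    (hy : ∀ᵐ ω ∂μ, IsRobbinsMonro γ (fun n => H (y n ω)) (ξ · ω) (y · ω))
    (hH : Continuous H) (hδ : 0 < δ) (hattr : ∀ u, u ≠ z → |u - z| ≤ δ → (u - z) * H u < 0)
    (hreach : ∀ η > 0, ∃ᶠ N in atTop, μ {ω | |y N ω - z| ≤ η} ≠ 0) :
    μ {ω | Tendsto (y · ω) atTop (nhds z)} ≠ 0 := by
  obtain ⟨η, hη, rfl⟩ : ∃ η > 0, 3 * η = δ := ⟨δ / 3, by positivity, by ring⟩
  have hγ_zero : Tendsto γ atTop (nhds 0) :=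
    tendsto_zero_of_tendsto_sq hγ_sq.tendsto_atTop_zero
  obtain ⟨N, hreachN, hstep, hVη⟩ : ∃ N, μ {ω | |y N ω - z| ≤ 2 * η} ≠ 0 ∧
      (∀ n u, |u - z| ≤ 3 * η → |γ (N + n) * H u| ≤ η) ∧
      C ^ 2 * ∑' j, γ (N + j) ^ 2 < η ^ 2 := by
    have htail : Tendsto (fun N => C ^ 2 * ∑' j, γ (N + j) ^ 2) atTop (nhds 0) := by
      simpa [add_comm] using (tendsto_sum_nat_add fun j => γ j ^ 2).const_mul (C ^ 2)
    obtain ⟨N, hN₁, hN₂, hN₃⟩ := ((hreach (2 * η) (by positivity)).and_eventually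
      ((eventually_forall_abs_mul_le hγ_zero hH z (3 * η) hη).and
        (htail.eventually_lt_const (pow_pos hη 2)))).exists
    exact ⟨N, hN₁, hN₂, hN₃⟩
  have hE : MeasurableSet[F N] {ω | |y N ω - z| ≤ 2 * η} :=
    hy_meas N (measurableSet_le (f := fun u => |u - z|) (by fun_prop) measurable_const)
  have hγN_sum : ¬ Summable fun n => γ (N + n) := by
    simpa only [add_comm N] using (summable_nat_add_iff N).not.2 hγ_sum
  have hγN_sq : Summable fun n => γ (N + n) ^ 2 := by
    simpa only [add_comm N] using (summable_nat_add_iff N).2 hγ_sq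
  have : NeZero (μ.restrict {ω | |y N ω - z| ≤ 2 * η}) :=
    ⟨Measure.restrict_eq_zero.not.2 hreachN⟩
  have hξN := (hξ.shift N).restrict hE
  have hquiet := hξN.measure_forall_abs_noiseSum_le_ne_zero
    (fun n => hγN_sq.sum_le_tsum _ fun _ _ => sq_nonneg _) hη.le hVη
  refine fun hzero => hquiet (measure_mono_null_ae ?_
    (Measure.restrict_le_self.absolutelyContinuous hzero))
  filter_upwards [ae_restrict_of_ae hy, ae_restrict_mem (F.le N _ hE),
    hξN.ae_exists_tendsto_noiseSum hγN_sq] with ω hyω hstart ⟨L, hL⟩ hnoise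
  have htail := (hyω.add_left N).tendsto_of_abs_noiseSum_le (fun n => hγ _)
    (by simpa only [add_comm N] using (tendsto_add_atTop_iff_nat N).2 hγ_zero) hγN_sum hH hattr
    hstep hstart hnoise hL
  simp only [add_comm N] at htail
  exact (tendsto_add_atTop_iff_nat N).1 htail

end Probability

/-! ### Conditional probabilities -/

section CondProb

variable {Ω ι : Type*} {m mΩ : MeasurableSpace Ω} {μ : Measure Ω}

lemma setIntegral_condProb [IsFiniteMeasure μ] (hm : m ≤ mΩ) {T E : Set Ω} {q : Ω → ℝ}
    (hT : MeasurableSet[mΩ] T) (hE : MeasurableSet[m] E) (hq : μ⟦T | m⟧ =ᵐ[μ] q) :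
    ∫ ω in E, q ω ∂μ = μ.real (E ∩ T) := by
  rw [← setIntegral_congr_ae (hm E hE) (hq.mono fun _ h _ => h),
    setIntegral_condExp hm ((integrable_const 1).indicator hT) hE, integral_indicator_const _ hT,
    measureReal_restrict_apply hT, smul_eq_mul, mul_one, inter_comm]

lemma measure_inter_ne_zero_of_condProb_pos [IsFiniteMeasure μ] (hm : m ≤ mΩ) {T E : Set Ω}
    {q : Ω → ℝ} (hT : MeasurableSet[mΩ] T) (hE : MeasurableSet[m] E) (hq : μ⟦T | m⟧ =ᵐ[μ] q)
    (hq_pos : ∀ᵐ ω ∂μ, 0 < q ω) (hμE : μ E ≠ 0) : μ (E ∩ T) ≠ 0 := by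
  have hq_int : IntegrableOn q E μ := (integrable_condExp.congr hq).integrableOn
  have hpos : 0 < ∫ ω in E, q ω ∂μ := by
    rw [setIntegral_pos_iff_support_of_nonneg_ae (ae_restrict_of_ae (hq_pos.mono fun _ => le_of_lt))
      hq_int]
    refine pos_iff_ne_zero.2 fun hzero => hμE (measure_mono_null_ae ?_ hzero)
    filter_upwards [hq_pos] with ω hω hωE
    exact ⟨hω.ne', hωE⟩
  rw [setIntegral_condProb hm hT hE hq] at hpos
  exact (measureReal_ne_zero_iff).1 hpos.ne'

variable [Fintype ι] {T : ι → Set Ω} {q : ι → Ω → ℝ}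

lemma ae_exists_mem_of_sum_condProb_eq_one [IsFiniteMeasure μ] (hm : m ≤ mΩ)
    (hT : ∀ i, MeasurableSet[mΩ] (T i)) (hdisj : Pairwise (Function.onFun Disjoint T))
    (hq : ∀ i, μ⟦T i | m⟧ =ᵐ[μ] q i) (hsum : ∀ ω, ∑ i, q i ω = 1) :
    ∀ᵐ ω ∂μ, ∃ i, ω ∈ T i := by
  have hmass : μ.real (⋃ i, T i) = μ.real univ := calc
    μ.real (⋃ i, T i) = ∑ i, μ.real (T i) := measureReal_iUnion_fintype hdisj hT
    _ = ∑ i, ∫ ω, q i ω ∂μ := by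
      refine Finset.sum_congr rfl fun i _ => ?_
      simpa using (setIntegral_condProb hm (hT i) MeasurableSet.univ (hq i)).symm
    _ = ∫ ω, ∑ i, q i ω ∂μ :=
      (integral_finsetSum _ fun i _ => integrable_condExp.congr (hq i)).symm
    _ = μ.real univ := by simp [hsum]
  have hcover : ⋃ i, T i =ᵐ[μ] univ :=
    ae_eq_of_subset_of_measure_ge (subset_univ _)
      ((measureReal_eq_measureReal_iff).1 hmass).ge (MeasurableSet.iUnion hT).nullMeasurableSet
      (measure_ne_top _ _)
  filter_upwards [eventuallyEq_univ.1 hcover] with ω hω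
  exact mem_iUnion.1 hω

lemma condExp_eq_sum_condProb_mul [IsFiniteMeasure μ] (hT : ∀ i, MeasurableSet[mΩ] (T i))
    (hdisj : Pairwise (Function.onFun Disjoint T)) (hq : ∀ i, μ⟦T i | m⟧ =ᵐ[μ] q i)
    (hcover : ∀ᵐ ω ∂μ, ∃ i, ω ∈ T i) {f : Ω → ℝ} {r : ι → ℝ}
    (hf : ∀ i, ∀ ω ∈ T i, f ω = r i) :
    μ[f | m] =ᵐ[μ] fun ω => ∑ i, q i ω * r i := by
  have hf_sum : f =ᵐ[μ] ∑ i, r i • (T i).indicator fun _ => (1 : ℝ) := by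
    filter_upwards [hcover] with ω ⟨i, hi⟩
    rw [Finset.sum_apply, Finset.sum_eq_single i]
    · simp [hi, hf i ω hi]
    · intro j _ hj
      simp [disjoint_left.1 (hdisj hj.symm) hi]
    · simp
  have hint (i : ι) : Integrable (r i • (T i).indicator fun _ => (1 : ℝ)) μ :=
    ((integrable_const 1).indicator (hT i)).smul (r i)
  filter_upwards [condExp_congr_ae (m := m) hf_sum, condExp_finsetSum (fun i _ => hint i) m,
    ae_all_iff.2 fun i => condExp_smul (r i) ((T i).indicator fun _ => (1 : ℝ)) m (μ := μ),
    ae_all_iff.2 hq] with ω h₁ h₂ h₃ h₄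
  rw [h₁, h₂, Finset.sum_apply]
  refine Finset.sum_congr rfl fun i _ => ?_
  rw [h₃, Pi.smul_apply, h₄, smul_eq_mul, mul_comm]

end CondProb

lemma exists_pos_nonneg_of_weighted_sum_eq_zero {ι : Type*} [Fintype ι] {q c : ι → ℝ}
    (hq : ∀ i, 0 ≤ q i) (hsum : ∑ i, q i ≠ 0) (hmean : ∑ i, q i * c i = 0) :
    ∃ i, 0 < q i ∧ 0 ≤ c i := by
  by_contra! hneg
  have hterm (i : ι) : q i * c i ≤ 0 := by
    rcases (hq i).eq_or_lt with hi | hi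
    · simp [← hi]
    · exact (mul_neg_of_pos_of_neg hi (hneg i hi)).le
  obtain ⟨i, -, hi₀⟩ := Finset.exists_ne_zero_of_sum_ne_zero hsum
  have hi : 0 < q i := (hq i).lt_of_ne' hi₀
  exact (Finset.sum_neg' (fun j _ => hterm j)
    ⟨i, Finset.mem_univ i, mul_neg_of_pos_of_neg hi (hneg i hi)⟩).ne hmean

/-! ### The preferential attachment process -/

section Polynomial

variable (m : ℕ) (p : ℕ → ℝ) (x : ℝ)

lemma eval_bernsteinPolynomial (k : ℕ) :
    (bernsteinPolynomial ℝ m k).eval x = m.choose k * x ^ k * (1 - x) ^ (m - k) := by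
  simp [bernsteinPolynomial]

lemma sum_eval_bernsteinPolynomial :
    ∑ k ∈ Finset.range (m + 1), (bernsteinPolynomial ℝ m k).eval x = 1 := by
  rw [← Polynomial.eval_finsetSum, bernsteinPolynomial.sum, Polynomial.eval_one]

lemma sum_eval_bernsteinPolynomial_mul_cast :
    ∑ k ∈ Finset.range (m + 1), (bernsteinPolynomial ℝ m k).eval x * k = m * x := by
  simpa [Polynomial.eval_finsetSum, mul_comm] using
    congrArg (Polynomial.eval x) (bernsteinPolynomial.sum_smul ℝ m)

lemma sum_eval_bernsteinPolynomial_mul (hm : m ≠ 0) :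
    ∑ k ∈ Finset.range (m + 1), (bernsteinPolynomial ℝ m k).eval x * p k =
      2 * polyP m p x + x := by
  have hx : ∑ k ∈ Finset.range (m + 1), (bernsteinPolynomial ℝ m k).eval x * ((k : ℝ) / m) = x := by
    simp only [← mul_div_assoc]
    rw [← Finset.sum_div, sum_eval_bernsteinPolynomial_mul_cast]
    field_simp
  simp only [polyP, ← eval_bernsteinPolynomial, mul_sub, Finset.sum_sub_distrib]
  rw [hx]
  ring

lemma continuous_polyP : Continuous (polyP m p) := by
  unfold polyP
  fun_prop

end Polynomial

namespace PAProcess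

variable {Ω : Type} [MeasurableSpace Ω] (P : PAProcess Ω)

lemma two_mul_m_pos : (0 : ℝ) < 2 * P.m :=
  mul_pos two_pos (Nat.cast_pos.2 P.hm)

instance : IsProbabilityMeasure P.μ := P.isProb

/-- The possible moves in one step: `(k, b)` stands for a new node with `k` red neighbours, which
is red when `b` is `true` and blue when `b` is `false`. -/
abbrev Move : Type := Fin (P.m + 1) × Bool

/-- The increase of the red degree sum under a move. -/
def degreeIncr (i : P.Move) : ℕ := i.1 + P.m * i.2.toNat

/-- The event that the step from time `n` to time `n + 1` is the given move. -/
def transition (n : ℕ) (i : P.Move) : Set Ω :=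
  {ω | P.A (n + 1) ω = P.A n ω + i.2.toNat ∧ P.X (n + 1) ω = P.X n ω + P.degreeIncr i}

/-- The probability of a move when the normalized red degree is `x`. -/
def transitionProb (i : P.Move) (x : ℝ) : ℝ :=
  (bernsteinPolynomial ℝ P.m i.1).eval x * bif i.2 then P.p i.1 else 1 - P.p i.1

lemma degreeIncr_le (i : P.Move) : P.degreeIncr i ≤ 2 * P.m := by
  have hk := i.1.is_le
  rcases i with ⟨k, _ | _⟩ <;> simp only [degreeIncr, Bool.toNat] at * <;> grind

lemma transitionProb_nonneg (i : P.Move) {x : ℝ} (hx : x ∈ Icc (0 : ℝ) 1) :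
    0 ≤ P.transitionProb i x := by
  obtain ⟨hx₀, hx₁⟩ := hx
  obtain ⟨hp₀, hp₁⟩ := P.hp i.1 i.1.is_le
  have := sub_nonneg.2 hx₁
  have := sub_nonneg.2 hp₁
  rw [transitionProb, eval_bernsteinPolynomial]
  cases i.2 <;> simp only [cond_true, cond_false] <;> positivity

lemma transitionProb_pos_of_pos {i : P.Move} {x z : ℝ} (hx : x ∈ Ioo (0 : ℝ) 1)
    (hz : z ∈ Icc (0 : ℝ) 1) (hi : 0 < P.transitionProb i z) : 0 < P.transitionProb i x := by
  have hweight {u : ℝ} (hu₀ : 0 ≤ u) (hu₁ : 0 ≤ 1 - u) :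
      0 ≤ (bernsteinPolynomial ℝ P.m i.1).eval u := by
    rw [eval_bernsteinPolynomial]
    positivity
  refine mul_pos ?_ (pos_of_mul_pos_right hi (hweight hz.1 (sub_nonneg.2 hz.2)))
  have hx₁ := sub_pos.2 hx.2
  have hchoose : 0 < P.m.choose i.1 := Nat.choose_pos i.1.is_le
  rw [eval_bernsteinPolynomial]
  exact mul_pos (mul_pos (by positivity) (pow_pos hx.1 _)) (pow_pos hx₁ _)

lemma sum_transitionProb_mul (r : ℕ → Bool → ℝ) (x : ℝ) :
    ∑ i, P.transitionProb i x * r i.1 i.2 =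
      ∑ k ∈ Finset.range (P.m + 1), (bernsteinPolynomial ℝ P.m k).eval x *
        (P.p k * r k true + (1 - P.p k) * r k false) := by
  rw [Fintype.sum_prod_type, ← Fin.sum_univ_eq_sum_range fun k =>
    (bernsteinPolynomial ℝ P.m k).eval x * (P.p k * r k true + (1 - P.p k) * r k false)]
  refine Finset.sum_congr rfl fun k _ => ?_
  simp only [Fintype.sum_bool, transitionProb, cond_true, cond_false]
  ring

lemma sum_transitionProb (x : ℝ) : ∑ i, P.transitionProb i x = 1 := by
  simpa [sum_eval_bernsteinPolynomial] using P.sum_transitionProb_mul (fun _ _ => 1) x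

lemma sum_transitionProb_mul_toNat (x : ℝ) :
    ∑ i, P.transitionProb i x * (i.2.toNat : ℝ) = 2 * P.poly x + x := by
  rw [P.sum_transitionProb_mul fun _ b => b.toNat, poly,
    ← sum_eval_bernsteinPolynomial_mul _ _ _ (Nat.one_le_iff_ne_zero.1 P.hm)]
  simp

lemma sum_transitionProb_mul_degreeIncr (x : ℝ) :
    ∑ i, P.transitionProb i x * (P.degreeIncr i : ℝ) = 2 * P.m * P.poly x + 2 * P.m * x := by
  have hneighbours : ∑ i, P.transitionProb i x * ((i.1 : ℕ) : ℝ) = P.m * x := by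
    rw [P.sum_transitionProb_mul fun k _ => k, ← sum_eval_bernsteinPolynomial_mul_cast]
    refine Finset.sum_congr rfl fun k _ => ?_
    ring
  calc ∑ i, P.transitionProb i x * (P.degreeIncr i : ℝ)
      = ∑ i, P.transitionProb i x * ((i.1 : ℕ) : ℝ)
          + P.m * ∑ i, P.transitionProb i x * (i.2.toNat : ℝ) := by
        rw [Finset.mul_sum, ← Finset.sum_add_distrib]
        refine Finset.sum_congr rfl fun i _ => ?_
        rw [degreeIncr]
        push_cast
        ring
    _ = 2 * P.m * P.poly x + 2 * P.m * x := by
        rw [hneighbours, sum_transitionProb_mul_toNat]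
        ring

lemma S_cast (n : ℕ) : (P.S n : ℝ) = (P.X0 + P.Y0 : ℕ) + 2 * P.m * n := by
  simp [S]

/-- The red degree sums as a real-valued process. -/
def redDegree (n : ℕ) (ω : Ω) : ℝ :=
  P.X n ω

/-- The numbers of red nodes as a real-valued process. -/
def redCount (n : ℕ) (ω : Ω) : ℝ :=
  P.A n ω

lemma measurable_redDegree (n : ℕ) : Measurable[P.F n] (P.redDegree n) :=
  measurable_from_top.comp (P.adaptedX n)

lemma measurable_redCount (n : ℕ) : Measurable[P.F n] (P.redCount n) :=
  measurable_from_top.comp (P.adaptedA n)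

lemma measurable_x (n : ℕ) : Measurable[P.F n] (P.x n) :=
  (P.measurable_redDegree n).div_const _

lemma measurableSet_transition (n : ℕ) (i : P.Move) : MeasurableSet (P.transition n i) := by
  have hA (n : ℕ) : Measurable (P.A n) := (P.adaptedA n).mono (P.F.le n) le_rfl
  have hX (n : ℕ) : Measurable (P.X n) := (P.adaptedX n).mono (P.F.le n) le_rfl
  exact (measurableSet_eq_fun (hA _) ((hA _).add_const _)).inter
    (measurableSet_eq_fun (hX _) ((hX _).add_const _))

lemma pairwise_disjoint_transition (n : ℕ) :
    Pairwise (Function.onFun Disjoint (P.transition n)) := by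
  refine fun i j hij => disjoint_left.2 fun ω hi hj => hij ?_
  obtain ⟨hAi, hXi⟩ := hi
  obtain ⟨hAj, hXj⟩ := hj
  have hcolour : i.2 = j.2 := by
    cases hi : i.2 <;> cases hj : j.2 <;> simp_all
  simp only [degreeIncr, hcolour] at hXi hXj
  exact Prod.ext (Fin.ext (by omega)) hcolour

lemma condProb_transition (n : ℕ) (i : P.Move) :
    P.μ⟦P.transition n i | P.F n⟧ =ᵐ[P.μ] fun ω => P.transitionProb i (P.x n ω) := by
  rcases i with ⟨k, _ | _⟩
  · simpa [transition, transitionProb, degreeIncr, eval_bernsteinPolynomial, x, S]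
      using P.step_blue n k k.is_le
  · simpa [transition, transitionProb, degreeIncr, eval_bernsteinPolynomial, x, S, add_assoc]
      using P.step_red n k k.is_le

lemma ae_exists_mem_transition : ∀ᵐ ω ∂P.μ, ∀ n, ∃ i, ω ∈ P.transition n i :=
  ae_all_iff.2 fun n => ae_exists_mem_of_sum_condProb_eq_one (P.F.le n)
    (P.measurableSet_transition n) (P.pairwise_disjoint_transition n) (P.condProb_transition n)
    fun ω => P.sum_transitionProb (P.x n ω)

lemma condExp_eq_sum_transitionProb_mul (n : ℕ) {f : Ω → ℝ} {r : P.Move → ℝ}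
    (hf : ∀ i, ∀ ω ∈ P.transition n i, f ω = r i) :
    P.μ[f | P.F n] =ᵐ[P.μ] fun ω => ∑ i, P.transitionProb i (P.x n ω) * r i :=
  condExp_eq_sum_condProb_mul (P.measurableSet_transition n) (P.pairwise_disjoint_transition n)
    (P.condProb_transition n) (P.ae_exists_mem_transition.mono fun _ h => h n) hf

lemma ae_x_mem_Ioo (hX0 : 0 < P.X0) (hY0 : 0 < P.Y0) :
    ∀ᵐ ω ∂P.μ, ∀ n, P.x n ω ∈ Ioo (0 : ℝ) 1 := by
  filter_upwards [P.ae_exists_mem_transition] with ω hω n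
  have hbounds : P.X0 ≤ P.X n ω ∧ P.X n ω + P.Y0 ≤ P.S n := by
    induction n with
    | zero => simp [P.hX0, S]
    | succ n ih =>
      obtain ⟨i, -, hX⟩ := hω n
      have hS : P.S (n + 1) = P.S n + 2 * P.m := by
        simp only [S]
        ring
      have hi := P.degreeIncr_le i
      omega
  have hX : 0 < P.X n ω := by omega
  have hXS : P.X n ω < P.S n := by omega
  exact ⟨div_pos (Nat.cast_pos.2 hX) (Nat.cast_pos.2 (hX.trans hXS)),
    (div_lt_one (Nat.cast_pos.2 (hX.trans hXS))).2 (Nat.cast_lt.2 hXS)⟩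

variable {z : ℝ}

lemma exists_move_toward (hz : z ∈ Icc (0 : ℝ) 1) (hPz : P.poly z = 0) (σ : ℝ) :
    ∃ i, 0 < P.transitionProb i z ∧ 0 ≤ σ * (P.degreeIncr i - 2 * P.m * z) := by
  refine exists_pos_nonneg_of_weighted_sum_eq_zero (fun i => P.transitionProb_nonneg i hz)
    (by simp [sum_transitionProb]) ?_
  simp only [mul_left_comm _ σ, mul_sub, Finset.sum_sub_distrib, ← Finset.mul_sum,
    ← Finset.sum_mul, sum_transitionProb_mul_degreeIncr, sum_transitionProb, hPz]
  ring

/-- The excess of the red degree sum over its equilibrium value `z * S n`. -/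
def excess (z : ℝ) (n : ℕ) (ω : Ω) : ℝ :=
  P.X n ω - z * P.S n

lemma measurable_excess (z : ℝ) (n : ℕ) : Measurable[P.F n] (P.excess z n) :=
  (P.measurable_redDegree n).sub_const _

lemma excess_succ {n : ℕ} {i : P.Move} {ω : Ω} (hω : ω ∈ P.transition n i) :
    P.excess z (n + 1) ω = P.excess z n ω + (P.degreeIncr i - 2 * P.m * z) := by
  rw [excess, hω.2, excess, S_cast, S_cast]
  push_cast
  ring

lemma abs_degreeIncr_sub_le (hz : z ∈ Icc (0 : ℝ) 1) (i : P.Move) :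
    |P.degreeIncr i - 2 * P.m * z| ≤ 2 * P.m := by
  have hi : (P.degreeIncr i : ℝ) ≤ 2 * P.m := mod_cast P.degreeIncr_le i
  have hmz : 2 * P.m * z ≤ 2 * P.m := mul_le_of_le_one_right (by positivity) hz.2
  exact abs_sub_le_of_nonneg_of_le (by positivity) hi (mul_nonneg (by positivity) hz.1) hmz

lemma measure_excess_succ_ne_zero (hX0 : 0 < P.X0) (hY0 : 0 < P.Y0) (hz : z ∈ Icc (0 : ℝ) 1)
    (hPz : P.poly z = 0) {C : ℝ} (hC : 2 * P.m ≤ C) {n : ℕ}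
    (hn : P.μ {ω | |P.excess z n ω| ≤ C} ≠ 0) :
    P.μ {ω | |P.excess z (n + 1) ω| ≤ C} ≠ 0 := by
  obtain ⟨σ, hσ, hμσ⟩ : ∃ σ : ℝ, σ * σ = 1 ∧
      P.μ {ω | |P.excess z n ω| ≤ C ∧ P.excess z n ω * σ ≤ 0} ≠ 0 := by
    by_contra! hnull
    refine hn (measure_mono_null (fun ω hω => ?_)
      (measure_union_null (hnull 1 (by norm_num)) (hnull (-1) (by norm_num))))
    rcases le_total (P.excess z n ω) 0 with hneg | hpos
    · exact Or.inl ⟨hω, by simpa using hneg⟩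
    · exact Or.inr ⟨hω, by simpa using hpos⟩
  obtain ⟨i, hi, hσi⟩ := P.exists_move_toward hz hPz σ
  have hE : MeasurableSet[P.F n] {ω | |P.excess z n ω| ≤ C ∧ P.excess z n ω * σ ≤ 0} :=
    P.measurable_excess z n (t := {u | |u| ≤ C ∧ u * σ ≤ 0}) (by measurability)
  have hstep := measure_inter_ne_zero_of_condProb_pos (P.F.le n) (P.measurableSet_transition n i)
    hE (P.condProb_transition n i)
    ((P.ae_x_mem_Ioo hX0 hY0).mono fun ω hω => P.transitionProb_pos_of_pos (hω n) hz hi) hμσ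
  refine fun hzero => hstep (measure_mono_null ?_ hzero)
  rintro ω ⟨⟨hωC, hωσ⟩, hωi⟩
  have hopposite : P.excess z n ω * (P.degreeIncr i - 2 * P.m * z) ≤ 0 := by
    linear_combination mul_nonpos_of_nonpos_of_nonneg hωσ hσi -
      P.excess z n ω * (P.degreeIncr i - 2 * P.m * z) * hσ
  rw [mem_ofPred_eq, P.excess_succ hωi]
  exact (abs_add_le_max_of_mul_nonpos hopposite).trans
    (max_le hωC ((P.abs_degreeIncr_sub_le hz i).trans hC))

lemma eventually_measure_abs_x_sub_le_ne_zero (hX0 : 0 < P.X0) (hY0 : 0 < P.Y0)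
    (hz : z ∈ Icc (0 : ℝ) 1) (hPz : P.poly z = 0) {η : ℝ} (hη : 0 < η) :
    ∀ᶠ n in atTop, P.μ {ω | |P.x n ω - z| ≤ η} ≠ 0 := by
  obtain ⟨C, hC⟩ : ∃ C, ∀ n, P.μ {ω | |P.excess z n ω| ≤ C} ≠ 0 := by
    refine ⟨|P.X0 - z * P.S 0| + 2 * P.m, fun n => ?_⟩
    induction n with
    | zero => simp [excess, P.hX0]
    | succ n ih =>
      exact P.measure_excess_succ_ne_zero hX0 hY0 hz hPz (le_add_of_nonneg_left (abs_nonneg _)) ih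
  have hS : Tendsto (fun n => (P.S n : ℝ)) atTop atTop := by
    simp only [S_cast]
    exact tendsto_atTop_add_const_left _ _
      (tendsto_natCast_atTop_atTop.const_mul_atTop P.two_mul_m_pos)
  filter_upwards [hS.eventually_gt_atTop 0, (hS.const_div_atTop C).eventually_le_const hη]
    with n hSn hCn hzero
  refine hC n (measure_mono_null (fun ω hω => ?_) hzero)
  have hx : P.x n ω - z = P.excess z n ω / P.S n := by
    rw [excess, sub_div, mul_div_cancel_right₀ _ hSn.ne', x]
  rw [mem_ofPred_eq, hx, abs_div, abs_of_pos hSn]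
  exact (div_le_div_of_nonneg_right hω hSn.le).trans hCn

lemma increment_redDegree {n : ℕ} {i : P.Move} {ω : Ω} (hω : ω ∈ P.transition n i) :
    increment P.redDegree n ω = P.degreeIncr i := by
  simp [increment, redDegree, hω.2]

lemma increment_redCount {n : ℕ} {i : P.Move} {ω : Ω} (hω : ω ∈ P.transition n i) :
    increment P.redCount n ω = i.2.toNat := by
  simp [increment, redCount, hω.1]

/-- The noise driving the normalized red degrees. -/
def degreeNoise : ℕ → Ω → ℝ :=
  innovation P.F P.μ (increment P.redDegree)

/-- The noise driving the normalized red node counts. -/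
def countNoise : ℕ → Ω → ℝ :=
  innovation P.F P.μ (increment P.redCount)

lemma isBoundedMartingaleDiff_degreeNoise :
    IsBoundedMartingaleDiff P.degreeNoise P.F P.μ (2 * (2 * P.m)) := by
  refine isBoundedMartingaleDiff_innovation_increment P.measurable_redDegree fun n => ?_
  filter_upwards [P.ae_exists_mem_transition] with ω hω
  obtain ⟨i, hi⟩ := hω n
  rw [P.increment_redDegree hi, Nat.abs_cast]
  exact mod_cast P.degreeIncr_le i

lemma isBoundedMartingaleDiff_countNoise :
    IsBoundedMartingaleDiff P.countNoise P.F P.μ (2 * 1) := by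
  refine isBoundedMartingaleDiff_innovation_increment P.measurable_redCount fun n => ?_
  filter_upwards [P.ae_exists_mem_transition] with ω hω
  obtain ⟨i, hi⟩ := hω n
  rw [P.increment_redCount hi, Nat.abs_cast]
  exact mod_cast Bool.toNat_le i.2

lemma ae_isRobbinsMonro_x :
    ∀ᵐ ω ∂P.μ, IsRobbinsMonro (stepSize (P.X0 + P.Y0 : ℕ) (2 * P.m))
      (fun n => 2 * P.m * P.poly (P.x n ω)) (P.degreeNoise · ω) (P.x · ω) := by
  have hdrift (n : ℕ) : P.μ[increment P.redDegree n | P.F n] =ᵐ[P.μ]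
      fun ω => 2 * P.m * P.poly (P.x n ω) + 2 * P.m * P.x n ω := by
    simpa only [sum_transitionProb_mul_degreeIncr] using
      P.condExp_eq_sum_transitionProb_mul n fun i ω hω => P.increment_redDegree hω
  have hstart : ((P.X0 + P.Y0 : ℕ) : ℝ) = 0 → ∀ ω, P.redDegree 0 ω = 0 := fun h ω => by
    have hX0 : P.X0 = 0 := by
      rw [Nat.cast_eq_zero] at h
      omega
    simp [redDegree, P.hX0, hX0]
  filter_upwards [ae_isRobbinsMonro_ratio (Nat.cast_nonneg _) P.two_mul_m_pos hstart hdrift]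
    with ω hω
  simpa only [← S_cast, degreeNoise, redDegree, x, add_sub_cancel_right] using hω

lemma ae_isRobbinsMonro_a :
    ∀ᵐ ω ∂P.μ, IsRobbinsMonro (stepSize (P.A0 + P.B0 : ℕ) 1)
      (fun n => 2 * P.poly (P.x n ω) + P.x n ω - P.a n ω) (P.countNoise · ω) (P.a · ω) := by
  have hdrift (n : ℕ) : P.μ[increment P.redCount n | P.F n] =ᵐ[P.μ]
      fun ω => 2 * P.poly (P.x n ω) + P.x n ω := by
    simpa only [sum_transitionProb_mul_toNat] using
      P.condExp_eq_sum_transitionProb_mul n fun i ω hω => P.increment_redCount hω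
  have hstart : ((P.A0 + P.B0 : ℕ) : ℝ) = 0 → ∀ ω, P.redCount 0 ω = 0 := fun h ω => by
    have hA0 : P.A0 = 0 := by
      rw [Nat.cast_eq_zero] at h
      omega
    simp [redCount, P.hA0, hA0]
  filter_upwards [ae_isRobbinsMonro_ratio (Nat.cast_nonneg _) one_pos hstart hdrift] with ω hω
  simpa only [one_mul, Nat.cast_add, countNoise, redCount, a] using hω

lemma ae_abs_a_le_one : ∀ᵐ ω ∂P.μ, ∀ n, |P.a n ω| ≤ 1 := by
  filter_upwards [P.ae_exists_mem_transition] with ω hω n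
  have hA : P.A n ω ≤ P.A0 + P.B0 + n := by
    induction n with
    | zero => simp [P.hA0]
    | succ n ih =>
      obtain ⟨i, hA, -⟩ := hω n
      have hi := Bool.toNat_le i.2
      omega
  have ha : 0 ≤ P.a n ω := by
    unfold a
    positivity
  rw [abs_of_nonneg ha]
  exact div_le_one_of_le₀ (mod_cast hA) (by positivity)

lemma ae_tendsto_a_of_tendsto_x (hPz : P.poly z = 0) :
    ∀ᵐ ω ∂P.μ, Tendsto (P.x · ω) atTop (nhds z) → Tendsto (P.a · ω) atTop (nhds z) := by
  filter_upwards [P.ae_isRobbinsMonro_a, P.ae_abs_a_le_one,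
    P.isBoundedMartingaleDiff_countNoise.ae_exists_tendsto_noiseSum
      (summable_stepSize_sq (α := (P.A0 + P.B0 : ℕ)) one_pos)] with ω ha hbound ⟨L, hL⟩ hx
  refine ha.tendsto_of_tendsto_target (fun n => (stepSize_pos (Nat.cast_nonneg _) one_pos n).le)
    (tendsto_stepSize one_pos) (not_summable_stepSize one_pos) hL hbound ?_
  have hpoly : Tendsto (fun n => P.poly (P.x n ω)) atTop (nhds (P.poly z)) :=
    ((continuous_polyP P.m P.p).tendsto z).comp hx
  simpa [hPz] using (hpoly.const_mul 2).add hx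

lemma measure_tendsto_x_ne_zero (hX0 : 0 < P.X0) (hY0 : 0 < P.Y0) (hz : z ∈ Icc (0 : ℝ) 1)
    (hPz : P.poly z = 0) {δ : ℝ} (hδ : 0 < δ)
    (hattr : ∀ u, u ≠ z → |u - z| ≤ δ → (u - z) * P.poly u < 0) :
    P.μ {ω | Tendsto (P.x · ω) atTop (nhds z)} ≠ 0 := by
  have hm := P.two_mul_m_pos
  refine measure_tendsto_ne_zero_of_local_attraction
    (fun n => (stepSize_pos (Nat.cast_nonneg _) hm n).le) (not_summable_stepSize hm)
    (summable_stepSize_sq hm) P.isBoundedMartingaleDiff_degreeNoise P.measurable_x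
    P.ae_isRobbinsMonro_x ((continuous_polyP P.m P.p).const_mul _) hδ (fun u hu hδu => ?_)
    fun η hη => (P.eventually_measure_abs_x_sub_le_ne_zero hX0 hY0 hz hPz hη).frequently
  rw [mul_left_comm]
  exact mul_neg_of_pos_of_neg hm (hattr u hu hδu)

end PAProcess

/-- **Nonlinear models, stable equilibria.** In a nonlinear model with `X_0, Y_0 > 0`, if
`z ∈ Z_P ∩ (0,1)` is a stable zero, i.e. there is `ε > 0` with `P > 0` on `(z−ε, z)` and
`P < 0` on `(z, z+ε)`, then `a_n → z` with positive probability. -/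
theorem nonlinear_model_stable_equilibrium
    {Ω : Type} [MeasurableSpace Ω] (P : PAProcess Ω)
    (hnonlin : ∃ k ≤ P.m, P.p k ≠ (k : ℝ) / P.m)
    (hX0 : 0 < P.X0) (hY0 : 0 < P.Y0)
    (z : ℝ) (hz : z ∈ P.Zp ∩ Set.Ioo (0 : ℝ) 1)
    (ε : ℝ) (hε : 0 < ε)
    (hpos : ∀ y ∈ Set.Ioo (z - ε) z, 0 < P.poly y)
    (hneg : ∀ y ∈ Set.Ioo z (z + ε), P.poly y < 0) :
    0 < P.μ {ω | Tendsto (fun n => P.a n ω) atTop (nhds z)} := by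
  obtain ⟨⟨hz_mem, hPz⟩, -⟩ := hz
  have hattr (u : ℝ) (hu : u ≠ z) (huε : |u - z| ≤ ε / 2) : (u - z) * P.poly u < 0 := by
    obtain ⟨hu₁, hu₂⟩ := abs_le.1 huε
    rcases hu.lt_or_gt with hlt | hgt
    · exact mul_neg_of_neg_of_pos (sub_neg.2 hlt) (hpos u ⟨by linarith, hlt⟩)
    · exact mul_neg_of_pos_of_neg (sub_pos.2 hgt) (hneg u ⟨hgt, by linarith⟩)
  have hx := P.measure_tendsto_x_ne_zero hX0 hY0 hz_mem hPz (half_pos hε) hattr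
  exact pos_iff_ne_zero.2 fun hzero =>
    hx (measure_mono_null_ae (P.ae_tendsto_a_of_tendsto_x hPz) hzero)
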